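/- For arbitrary q^i p^j, q^k p^l in the bicyclic monoid C(p,q) and any m ≥ max{i, j, k, l}, one has q^i p^j · W_{2m}(q^k p^l) ⊆ W_m(q^i p^j · q^k p^l) and W_{2m}(q^k p^l) · q^i p^j ⊆ W_m(q^k p^l · q^i p^j), where W_n(q^s p^t) = {q^s p^t} ∪ {q^a p^b : a > n or b > n}. -/

import Mathlib

/-- The bicyclic monoid `C(p,q)` modeled on `ℕ × ℕ`, where `(k, l)` represents `q^k p^l`:
`(k,l)·(m,n) = (k + (m ∸ l), n + (l ∸ m))`. -/
def bmul (a b : ℕ × ℕ) : ℕ × ℕ := (a.1 + (b.1 - a.2), b.2 + (a.2 - b.1))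

/-- `W_n(q^s p^t) = {q^s p^t} ∪ {q^a p^b : a > n or b > n}`. -/
def Wc (n : ℕ) (x : ℕ × ℕ) : Set (ℕ × ℕ) := {x} ∪ {y | n < y.1 ∨ n < y.2}

/-- For any `m ≥ max{i, j, k, l}`:
`q^i p^j · W_{2m}(q^k p^l) ⊆ W_m(q^i p^j · q^k p^l)` and
`W_{2m}(q^k p^l) · q^i p^j ⊆ W_m(q^k p^l · q^i p^j)`. -/
theorem stmt8 (i j k l m : ℕ) (hm : max (max i j) (max k l) ≤ m) :
    (fun x => bmul (i, j) x) '' Wc (2 * m) (k, l) ⊆ Wc m (bmul (i, j) (k, l)) ∧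
    (fun x => bmul x (i, j)) '' Wc (2 * m) (k, l) ⊆ Wc m (bmul (k, l) (i, j)) := by
  simp only [max_le_iff] at hm
  constructor
  · rintro _ ⟨⟨a, b⟩, h, rfl⟩
    rcases h with h | h
    · left
      rw [Set.mem_singleton_iff] at h
      rw [h]
      rfl
    · right
      simp only [Set.mem_setOf_eq, bmul] at h ⊢
      omega
  · rintro _ ⟨⟨a, b⟩, h, rfl⟩
    rcases h with h | h
    · left
      rw [Set.mem_singleton_iff] at h
      rw [h]
      rfl
    · right
      simp only [Set.mem_setOf_eq, bmul] at h ⊢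
      omega
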